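/- arXiv:2507.11894 — 2 statements merged into one kernel-verified Lean document; each statement's English description precedes it below -/
import Mathlib

section
/- (Theorem 1, conditional form.) Let μ₁, μ₂ ∈ ℝ, σ₁, σ₂ > 0 and ρ ∈ (−1,1), and let (S, Ŝ) be a random vector in ℝ² whose law is the Gaussian measure on ℝ² with mean vector (μ₁, μ₂) and covariance matrix [[σ₁², ρσ₁σ₂], [ρσ₁σ₂, σ₂²]]. Then the probability that S and Ŝ have opposite signs satisfies P[S·Ŝ < 0] = Φ(δ) + Φ(δ̂) − 2Φ₂(δ, δ̂; ρ), where δ = −μ₁/σ₁ and δ̂ = −μ₂/σ₂. -/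
/-!
The density of `gammaRho ρ` at `(x, y)` factors as the standard normal density at `x` times the
density of `N(ρ x, 1 - ρ²)` at `y` (complete the square in `y`). Integrating out `y` shows that the
first marginal is the standard normal law, and the symmetry of the density in `(x, y)` gives the same
for the second marginal (`gammaRho_map_fst`, `gammaRho_map_snd`).

With `A = {z₁ ≤ δ}` and `B = {z₂ ≤ δ'}`, the event of opposite signs pulls back, up to the null
lines `z₁ = δ` and `z₂ = δ'`, to the set where exactly one of `A` and `B` holds, whose measure is
`γ(A) + γ(B) - 2 γ(A ∩ B)`.
-/

open MeasureTheory ProbabilityTheory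

/-- The centered Gaussian measure on `ℝ²` with unit variances and correlation `ρ`
(covariance matrix `[[1, ρ], [ρ, 1]]`), defined through its density. -/
noncomputable def gammaRho (ρ : ℝ) : Measure (ℝ × ℝ) :=
  (volume : Measure (ℝ × ℝ)).withDensity fun z =>
    ENNReal.ofReal ((2 * Real.pi * Real.sqrt (1 - ρ ^ 2))⁻¹ *
      Real.exp (-(z.1 ^ 2 - 2 * ρ * z.1 * z.2 + z.2 ^ 2) / (2 * (1 - ρ ^ 2))))

/-- The standard normal cumulative distribution function `Φ`. -/
noncomputable def stdNormalCDF (x : ℝ) : ℝ := ((gaussianReal 0 1) (Set.Iic x)).toReal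

/-- The bivariate normal CDF `Φ₂(x, y; ρ) = γ_ρ({z : z₁ ≤ x ∧ z₂ ≤ y})`. -/
noncomputable def Phi2 (x y ρ : ℝ) : ℝ :=
  ((gammaRho ρ) {z : ℝ × ℝ | z.1 ≤ x ∧ z.2 ≤ y}).toReal

/-- Conditional factorization of the bivariate normal density: the second coordinate given
`z₁ = x` has law `N(ρ x, 1 - ρ²)`. -/
lemma gammaRho_density_eq {ρ : ℝ} (hρ : 0 < 1 - ρ ^ 2) (x y : ℝ) :
    ENNReal.ofReal ((2 * Real.pi * Real.sqrt (1 - ρ ^ 2))⁻¹ *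
      Real.exp (-(x ^ 2 - 2 * ρ * x * y + y ^ 2) / (2 * (1 - ρ ^ 2)))) =
    gaussianPDF 0 1 x * gaussianPDF (ρ * x) (1 - ρ ^ 2).toNNReal y := by
  rw [gaussianPDF, gaussianPDF, ← ENNReal.ofReal_mul (gaussianPDFReal_nonneg _ _ _)]
  congr 1
  simp only [gaussianPDFReal, Real.coe_toNNReal _ hρ.le, NNReal.coe_one]
  have hpi := Real.pi_pos
  rw [mul_mul_mul_comm, ← Real.exp_add, ← mul_inv]
  congr 2
  · rw [mul_one, Real.sqrt_mul (by positivity) (1 - ρ ^ 2), ← mul_assoc,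
      Real.mul_self_sqrt (by positivity)]
  · field_simp
    ring

lemma gammaRho_map_fst {ρ : ℝ} (hρ : 0 < 1 - ρ ^ 2) :
    (gammaRho ρ).map Prod.fst = gaussianReal 0 1 := by
  have hv : (1 - ρ ^ 2).toNNReal ≠ 0 := by simpa using hρ
  ext s hs
  rw [Measure.map_apply measurable_fst hs, gammaRho,
    withDensity_apply _ (measurable_fst hs), gaussianReal_apply _ one_ne_zero,
    ← Set.prod_univ, Measure.volume_eq_prod, ← Measure.prod_restrict, Measure.restrict_univ,
    lintegral_prod _ (by fun_prop)]
  refine lintegral_congr fun x => ?_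
  simp only [gammaRho_density_eq hρ]
  rw [lintegral_const_mul _ (measurable_gaussianPDF _ _), lintegral_gaussianPDF_eq_one _ hv, mul_one]

lemma gammaRho_map_swap (ρ : ℝ) : (gammaRho ρ).map Prod.swap = gammaRho ρ := by
  ext s hs
  have hsw : MeasurePreserving (Prod.swap : ℝ × ℝ → ℝ × ℝ) volume volume :=
    Measure.measurePreserving_swap
  rw [Measure.map_apply measurable_swap hs, gammaRho, withDensity_apply _ (measurable_swap hs),
    withDensity_apply _ hs,
    ← hsw.setLIntegral_comp_preimage hs (by fun_prop)]
  refine lintegral_congr fun z => ?_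
  simp only [Prod.fst_swap, Prod.snd_swap]
  congr 4
  ring

lemma gammaRho_map_snd {ρ : ℝ} (hρ : 0 < 1 - ρ ^ 2) :
    (gammaRho ρ).map Prod.snd = gaussianReal 0 1 := by
  rw [← gammaRho_map_fst hρ]
  conv_rhs => rw [← gammaRho_map_swap, Measure.map_map measurable_fst measurable_swap]
  rfl

/-- Theorem 1 (conditional form): if `(S, Shat)` has the Gaussian law on `ℝ²` with mean
vector `(μ₁, μ₂)` and covariance matrix `[[σ₁², ρσ₁σ₂], [ρσ₁σ₂, σ₂²]]` (realized as the
pushforward of `γ_ρ` under `z ↦ (μ₁ + σ₁ z₁, μ₂ + σ₂ z₂)`), then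
`P[S·Shat < 0] = Φ(δ) + Φ(δ') − 2Φ₂(δ, δ'; ρ)` with `δ = −μ₁/σ₁`, `δ' = −μ₂/σ₂`. -/
theorem prob_opposite_signs (μ₁ μ₂ σ₁ σ₂ ρ : ℝ) (hσ₁ : 0 < σ₁) (hσ₂ : 0 < σ₂)
    (hρ : ρ ∈ Set.Ioo (-1 : ℝ) 1)
    {Ω : Type*} [MeasurableSpace Ω] (P : Measure Ω) [IsProbabilityMeasure P]
    (S Shat : Ω → ℝ) (hmeas : AEMeasurable (fun ω => (S ω, Shat ω)) P)
    (hlaw : P.map (fun ω => (S ω, Shat ω)) =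
      (gammaRho ρ).map (fun z => (μ₁ + σ₁ * z.1, μ₂ + σ₂ * z.2)))
    (δ δ' : ℝ) (hδ : δ = -(μ₁ / σ₁)) (hδ' : δ' = -(μ₂ / σ₂)) :
    (P {ω | S ω * Shat ω < 0}).toReal =
      stdNormalCDF δ + stdNormalCDF δ' - 2 * Phi2 δ δ' ρ := by
  have hρ' : 0 < 1 - ρ ^ 2 := by nlinarith [hρ.1, hρ.2]
  have hfst := gammaRho_map_fst hρ'
  have hsnd := gammaRho_map_snd hρ'
  have hprob : IsProbabilityMeasure (gammaRho ρ) := by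
    have h : IsProbabilityMeasure ((gammaRho ρ).map Prod.fst) := by rw [hfst]; infer_instance
    exact (Measure.isProbabilityMeasure_map_iff measurable_fst.aemeasurable).1 h
  have hneg : MeasurableSet {p : ℝ × ℝ | p.1 * p.2 < 0} :=
    measurableSet_lt (by fun_prop) (by fun_prop)
  have hP : P {ω | S ω * Shat ω < 0} =
      gammaRho ρ {z | (μ₁ + σ₁ * z.1) * (μ₂ + σ₂ * z.2) < 0} := by
    have h := DFunLike.congr_fun hlaw {p : ℝ × ℝ | p.1 * p.2 < 0}
    rw [Measure.map_apply_of_aemeasurable hmeas hneg, Measure.map_apply (by fun_prop) hneg] at h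
    exact h
  set A : Set (ℝ × ℝ) := Prod.fst ⁻¹' Set.Iic δ with hAdef
  set B : Set (ℝ × ℝ) := Prod.snd ⁻¹' Set.Iic δ' with hBdef
  have hA : MeasurableSet A := measurable_fst measurableSet_Iic
  have hB : MeasurableSet B := measurable_snd measurableSet_Iic
  have hΦA : stdNormalCDF δ = (gammaRho ρ).real A := by
    rw [stdNormalCDF, ← hfst, Measure.map_apply measurable_fst measurableSet_Iic, measureReal_def]
  have hΦB : stdNormalCDF δ' = (gammaRho ρ).real B := by
    rw [stdNormalCDF, ← hsnd, Measure.map_apply measurable_snd measurableSet_Iic, measureReal_def]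
  have hΦAB : Phi2 δ δ' ρ = (gammaRho ρ).real (A ∩ B) := rfl
  have hnoatom : NullSingletonClass (gaussianReal 0 1) := nullSingletonClass_gaussianReal one_ne_zero
  have hne1 : ∀ᵐ z ∂(gammaRho ρ), z.1 ≠ δ := by
    refine ae_of_ae_map measurable_fst.aemeasurable (p := fun x => x ≠ δ) ?_
    rw [hfst]
    exact Measure.ae_ne _ δ
  have hne2 : ∀ᵐ z ∂(gammaRho ρ), z.2 ≠ δ' := by
    refine ae_of_ae_map measurable_snd.aemeasurable (p := fun x => x ≠ δ') ?_
    rw [hsnd]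
    exact Measure.ae_ne _ δ'
  have hae : {z : ℝ × ℝ | (μ₁ + σ₁ * z.1) * (μ₂ + σ₂ * z.2) < 0} =ᵐ[gammaRho ρ]
      ((A \ B) ∪ (B \ A) : Set (ℝ × ℝ)) := by
    filter_upwards [hne1, hne2] with z h1 h2
    have e1 : μ₁ + σ₁ * z.1 = σ₁ * (z.1 - δ) := by rw [hδ]; field_simp; ring
    have e2 : μ₂ + σ₂ * z.2 = σ₂ * (z.2 - δ') := by rw [hδ']; field_simp; ring
    apply propext
    change (μ₁ + σ₁ * z.1) * (μ₂ + σ₂ * z.2) < 0 ↔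
      (z.1 ≤ δ ∧ ¬ z.2 ≤ δ') ∨ (z.2 ≤ δ' ∧ ¬ z.1 ≤ δ)
    have e3 : σ₁ * (z.1 - δ) * (σ₂ * (z.2 - δ')) = (σ₁ * σ₂) * ((z.1 - δ) * (z.2 - δ')) := by ring
    rw [e1, e2, e3, ← mul_zero (σ₁ * σ₂), mul_lt_mul_iff_of_pos_left (mul_pos hσ₁ hσ₂), mul_neg_iff]
    simp only [sub_pos, sub_neg, not_le]
    rw [le_iff_lt_or_eq, le_iff_lt_or_eq]
    tauto
  have hdisj : Disjoint (A \ B) (B \ A) := disjoint_sdiff_sdiff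
  rw [hP, measure_congr hae, ← measureReal_def,
    measureReal_union hdisj (hB.diff hA), hΦA, hΦB, hΦAB]
  have h1 := measureReal_sdiff_add_inter (μ := gammaRho ρ) (s := A) hB
  have h2 := measureReal_sdiff_add_inter (μ := gammaRho ρ) (s := B) hA
  rw [Set.inter_comm B A] at h2
  linarith
end

section
/- (Theorem 1, per-erasure-pattern form in the retrieval model.) On a probability space, let V be a random vector with law multivariateGaussian μ Σ and let E be a {0,1}^N-valued random vector independent of V. Fix a ∈ ℝ^N and b ∈ ℝ, and define s = ⟨a, V⟩ + b and ŝ = ⟨a, V ∘ E⟩ + b. Let σ_s² = aᵀ Σ a and assume σ_s > 0. Then for every pattern η ∈ {0,1}^N with P[E = η] > 0 such that σ_η² := aᵀ D_η Σ D_η a > 0 and ρ_η := (aᵀ D_η Σ a)/(σ_s σ_η) ∈ (−1,1), the conditional probability satisfies P[s·ŝ < 0 | E = η] = Φ(δ) + Φ(δ̂_η) − 2Φ₂(δ, δ̂_η; ρ_η), where δ = −(⟨a, μ⟩ + b)/σ_s and δ̂_η = −(⟨D_η a, μ⟩ + b)/σ_η. -/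
/-!
On the event `E = η` the pair `(s, ŝ)` equals a fixed pair of affine functionals of `V`, so by
independence the conditional probability is an unconditional one under the Gaussian law of `V`.
After standardization, the signs of `s` and `ŝ` are those of `Z₁ - δ` and `Z₂ - δ̂_η`, where
`(Z₁, Z₂)` is a centered Gaussian pair with unit variances and correlation `ρ_η`.

That `(Z₁, Z₂)` has law `γ_ρ` is proved by the Cramér–Wold device (`ext_of_map_linear`). The
density-defined Gaussian measure is the image of a product of standard real Gaussians under an
affine map `z ↦ μ + B z` (`multivariateGaussian_eq_map`), which gives all its one-dimensional
images (`multivariateGaussian_map_dot`); since `γ_ρ` is itself the case `N = 2`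
(`gammaRho_eq_map`), its one-dimensional images are known as well (`gammaRho_map_linear`), and
they agree with those of `(Z₁, Z₂)` (`map_pair_linear`). Finally, `(Z₁ - δ)(Z₂ - δ̂_η) < 0` is,
up to a null set, the symmetric difference of `{Z₁ ≤ δ}` and `{Z₂ ≤ δ̂_η}`, whose probability is
`Φ(δ) + Φ(δ̂_η) - 2 Φ₂(δ, δ̂_η; ρ_η)` by inclusion–exclusion (`gammaRho_sign`).
-/

open MeasureTheory ProbabilityTheory Matrix Finset

/-- The Gaussian probability measure on `ℝ^N` with mean vector `μ` and
(positive-definite) covariance matrix `S`, defined through its density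
`det(2π S)^{-1/2} exp(-(x-μ)ᵀ S⁻¹ (x-μ) / 2)` with respect to Lebesgue measure. -/
noncomputable def multivariateGaussian {N : ℕ} (μ : Fin N → ℝ)
    (S : Matrix (Fin N) (Fin N) ℝ) : Measure (Fin N → ℝ) :=
  (volume : Measure (Fin N → ℝ)).withDensity fun x =>
    ENNReal.ofReal (Real.sqrt (((2 * Real.pi) ^ N * S.det)⁻¹) *
      Real.exp (-((fun i => x i - μ i) ⬝ᵥ S⁻¹.mulVec fun i => x i - μ i) / 2))

/-! ### Gaussian densities as affine images of the standard Gaussian -/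


/-- The standard Gaussian on `ℝ^N`, as a product measure, has the product density. -/
theorem pi_gaussian_density (N : ℕ) :
    Measure.pi (fun _ : Fin N => gaussianReal 0 1) =
      (volume : Measure (Fin N → ℝ)).withDensity fun x =>
        ENNReal.ofReal (∏ i, gaussianPDFReal 0 1 (x i)) := by
  refine Measure.pi_eq fun s hs => ?_
  rw [withDensity_apply _ (MeasurableSet.univ_pi hs), volume_pi, Measure.restrict_pi_pi,
    ← ofReal_integral_eq_lintegral_ofReal
      (Integrable.fintype_prod fun i => (integrable_gaussianPDFReal 0 1).restrict)
      (ae_of_all _ fun x => Finset.prod_nonneg fun i _ => gaussianPDFReal_nonneg 0 1 _),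
    integral_fintype_prod_eq_prod (f := fun _ => gaussianPDFReal 0 1),
    ENNReal.ofReal_prod_of_nonneg
      fun i _ => integral_nonneg fun x => gaussianPDFReal_nonneg 0 1 x]
  simp_rw [gaussianReal_apply_eq_integral 0 one_ne_zero]

theorem prod_gaussianPDFReal {N : ℕ} (z : Fin N → ℝ) :
    ∏ i, gaussianPDFReal 0 1 (z i) =
      Real.sqrt (((2 * Real.pi) ^ N)⁻¹) * Real.exp (-(z ⬝ᵥ z) / 2) := by
  simp only [gaussianPDFReal, Finset.prod_mul_distrib, ← Real.exp_sum, dotProduct]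
  congr 1
  · simp only [Finset.prod_const, Finset.card_univ, Fintype.card_fin, NNReal.coe_one, mul_one]
    rw [Real.sqrt_inv, inv_pow, _root_.inv_inj, eq_comm, Real.sqrt_eq_iff_mul_self_eq_of_pos (by positivity), ← mul_pow, Real.mul_self_sqrt (by positivity)]
  · simp only [sub_zero, NNReal.coe_one, mul_one, neg_div, Finset.sum_neg_distrib, Finset.sum_div, pow_two]

/-- The measure defined by the Gaussian density with covariance `B Bᵀ` is the law of `μ + B Z` with
`Z` standard Gaussian, by the linear change of variables `x = μ + B z`. -/
theorem multivariateGaussian_eq_map {N : ℕ} (μ : Fin N → ℝ) (B : Matrix (Fin N) (Fin N) ℝ)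
    (hB : B.det ≠ 0) :
    _root_.multivariateGaussian μ (B * Bᵀ) =
      (Measure.pi fun _ : Fin N => gaussianReal 0 1).map fun z => μ + B *ᵥ z := by
  ext s hs
  have hm : Measurable fun z : Fin N → ℝ => μ + B *ᵥ z := by fun_prop
  rw [Measure.map_apply hm hs, pi_gaussian_density, _root_.multivariateGaussian, withDensity_apply _ hs,
    withDensity_apply _ (hm hs)]
  have himg : (fun z : Fin N → ℝ => μ + B *ᵥ z) '' ((fun z => μ + B *ᵥ z) ⁻¹' s) = s := by
    refine Set.image_preimage_eq _ fun x => ⟨B⁻¹ *ᵥ (x - μ), ?_⟩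
    simp [Matrix.mulVec_mulVec, Matrix.mul_nonsing_inv _ (isUnit_iff_ne_zero.2 hB)]
  have hder : ∀ z ∈ ((fun z => μ + B *ᵥ z) ⁻¹' s), HasFDerivWithinAt (fun z : Fin N → ℝ => μ + B *ᵥ z)
      (B.mulVecLin.toContinuousLinearMap) ((fun z => μ + B *ᵥ z) ⁻¹' s) z := fun z _ =>
    ((B.mulVecLin.toContinuousLinearMap).hasFDerivAt.const_add μ).hasFDerivWithinAt
  have hinj : Set.InjOn (fun z : Fin N → ℝ => μ + B *ᵥ z) ((fun z => μ + B *ᵥ z) ⁻¹' s) := by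
    intro x _ y _ h
    exact Matrix.mulVec_injective_iff_isUnit.2 ((Matrix.isUnit_iff_isUnit_det B).2 (isUnit_iff_ne_zero.2 hB)) (add_left_cancel h)
  conv_lhs => rw [← himg]
  rw [lintegral_image_eq_lintegral_abs_det_fderiv_mul volume (hm hs) hder hinj]
  refine lintegral_congr fun z => ?_
  have hdet : (B.mulVecLin.toContinuousLinearMap).det = B.det := by
    simp [ContinuousLinearMap.det, ← Matrix.toLin'_apply']
  rw [hdet, ← ENNReal.ofReal_mul (abs_nonneg _), prod_gaussianPDFReal]
  have hu := isUnit_iff_ne_zero.2 hB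
  have hq : (fun i => (μ + B *ᵥ z) i - μ i) ⬝ᵥ (B * Bᵀ)⁻¹ *ᵥ (fun i => (μ + B *ᵥ z) i - μ i) =
      z ⬝ᵥ z := by
    have : (fun i => (μ + B *ᵥ z) i - μ i) = B *ᵥ z := by ext; simp
    rw [this, Matrix.mul_inv_rev, Matrix.mulVec_mulVec, Matrix.mul_assoc,
      Matrix.nonsing_inv_mul _ hu, Matrix.mul_one, Matrix.dotProduct_mulVec,
      Matrix.vecMul_mulVec, Matrix.mul_nonsing_inv _ (by rwa [Matrix.det_transpose]),
      Matrix.vecMul_one]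
  rw [hq, ← mul_assoc]
  congr 2
  rw [Matrix.det_mul, Matrix.det_transpose, ← pow_two, mul_inv, Real.sqrt_mul (by positivity), Real.sqrt_inv (B.det ^ 2),
    Real.sqrt_sq_eq_abs]
  field_simp

/-- The factor used is the symmetric square root of `S`. -/
theorem exists_factor {N : ℕ} {S : Matrix (Fin N) (Fin N) ℝ} (hS : S.PosDef) :
    ∃ B : Matrix (Fin N) (Fin N) ℝ, B.det ≠ 0 ∧ S = B * Bᵀ := by
  open scoped MatrixOrder in
  have h0 : (0 : Matrix (Fin N) (Fin N) ℝ) ≤ S := hS.posSemidef.nonneg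
  have hsa : (CFC.sqrt S)ᵀ = CFC.sqrt S := by
    have := (CFC.sqrt_nonneg S).isSelfAdjoint.star_eq
    rwa [Matrix.star_eq_conjTranspose, Matrix.conjTranspose_eq_transpose_of_trivial] at this
  have hmul : CFC.sqrt S * CFC.sqrt S = S := CFC.sqrt_mul_sqrt_self S h0
  refine ⟨CFC.sqrt S, fun h => hS.det_pos.ne' ?_, by rw [hsa, hmul]⟩
  rw [← hmul, Matrix.det_mul, h, zero_mul]

/-- A linear functional of a standard Gaussian vector is a centered real Gaussian with variance
`‖w‖²`: its characteristic function factorizes over the coordinates. -/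
theorem pi_gaussian_map_dot {N : ℕ} (w : Fin N → ℝ) :
    (Measure.pi fun _ : Fin N => gaussianReal 0 1).map (fun z => w ⬝ᵥ z) =
      gaussianReal 0 (w ⬝ᵥ w).toNNReal := by
  have hm : Measurable fun z : Fin N → ℝ => w ⬝ᵥ z := by unfold dotProduct; fun_prop
  have := Measure.isProbabilityMeasure_map (μ := Measure.pi fun _ : Fin N => gaussianReal 0 1) hm.aemeasurable
  refine Measure.ext_of_charFun (funext fun t => ?_)
  have hw : 0 ≤ w ⬝ᵥ w := Finset.sum_nonneg fun i _ => mul_self_nonneg _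
  rw [charFun_apply_real, integral_map hm.aemeasurable (by fun_prop), charFun_gaussianReal,
    Real.coe_toNNReal _ hw]
  have h1 : ∀ i, ∫ x, Complex.exp (t * (w i * x : ℝ) * Complex.I) ∂(gaussianReal 0 1) =
      Complex.exp (-((t * w i) ^ 2 / 2)) := fun i => by
    have := charFun_gaussianReal (μ := 0) (v := 1) (t * w i)
    rw [charFun_apply_real] at this
    simpa [mul_assoc] using this
  simp only [dotProduct, Complex.ofReal_sum, Finset.mul_sum, Finset.sum_mul, Complex.exp_sum]
  rw [integral_fintype_prod_eq_prod (μ := fun _ : Fin N => gaussianReal 0 1)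
    (f := fun i (x : ℝ) => Complex.exp (t * (w i * x : ℝ) * Complex.I))]
  simp only [h1, ← Complex.exp_sum]
  congr 1
  push_cast
  simp only [Finset.sum_div, Finset.sum_neg_distrib, mul_zero, zero_mul, zero_sub]
  congr 1
  refine Finset.sum_congr rfl fun i _ => by ring

theorem multivariateGaussian_map_dot {N : ℕ} (μ : Fin N → ℝ) (B : Matrix (Fin N) (Fin N) ℝ)
    (hB : B.det ≠ 0) (c : Fin N → ℝ) (d : ℝ) :
    (_root_.multivariateGaussian μ (B * Bᵀ)).map (fun x => c ⬝ᵥ x + d) =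
      gaussianReal (c ⬝ᵥ μ + d) (c ⬝ᵥ (B * Bᵀ) *ᵥ c).toNNReal := by
  have hm : ∀ w : Fin N → ℝ, Measurable fun z : Fin N → ℝ => w ⬝ᵥ z := fun w => by
    unfold dotProduct; fun_prop
  have hq : c ⬝ᵥ (B * Bᵀ) *ᵥ c = (c ᵥ* B) ⬝ᵥ (c ᵥ* B) := by
    rw [← Matrix.mulVec_mulVec, Matrix.dotProduct_mulVec, Matrix.mulVec_transpose]
  rw [multivariateGaussian_eq_map μ B hB, Measure.map_map ((hm c).add_const d) (by fun_prop), hq]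
  have : (fun x => c ⬝ᵥ x + d) ∘ (fun z => μ + B *ᵥ z) =
      (fun y => (c ⬝ᵥ μ + d) + y) ∘ fun z => (c ᵥ* B) ⬝ᵥ z := by
    ext z
    simp only [Function.comp, dotProduct_add, Matrix.dotProduct_mulVec]
    ring
  rw [this, ← Measure.map_map (by fun_prop) (hm _), pi_gaussian_map_dot, gaussianReal_map_const_add,
    zero_add]

theorem isProbabilityMeasure_multivariateGaussian {N : ℕ} (μ : Fin N → ℝ)
    (B : Matrix (Fin N) (Fin N) ℝ) (hB : B.det ≠ 0) :
    IsProbabilityMeasure (_root_.multivariateGaussian μ (B * Bᵀ)) := by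
  rw [multivariateGaussian_eq_map μ B hB]
  exact Measure.isProbabilityMeasure_map (by fun_prop)

/-- The Cholesky factorization of the correlation matrix. -/
theorem corrFactor_mul_transpose {ρ : ℝ} (hρ : ρ ∈ Set.Ioo (-1 : ℝ) 1) :
    !![1, 0; ρ, √(1 - ρ ^ 2)] * !![1, 0; ρ, √(1 - ρ ^ 2)]ᵀ = !![1, ρ; ρ, 1] := by
  have h1 : 0 < 1 - ρ ^ 2 := by nlinarith [hρ.1, hρ.2]
  ext i j
  fin_cases i <;> fin_cases j <;>
    simp [Matrix.mul_apply, Fin.sum_univ_two, Real.mul_self_sqrt h1.le]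
  ring

/-- The bivariate density is the `N = 2` case of the multivariate one, transported along
`ℝ² ≃ ℝ × ℝ`. -/
theorem gammaRho_eq_map (ρ : ℝ) (hρ : ρ ∈ Set.Ioo (-1 : ℝ) 1) :
    gammaRho ρ = (_root_.multivariateGaussian 0
      (!![1, 0; ρ, √(1 - ρ ^ 2)] * !![1, 0; ρ, √(1 - ρ ^ 2)]ᵀ)).map
      MeasurableEquiv.finTwoArrow := by
  have h1 : 0 < 1 - ρ ^ 2 := by nlinarith [hρ.1, hρ.2]
  have hS := corrFactor_mul_transpose hρ
  have hdet : (!![1, ρ; ρ, 1] : Matrix (Fin 2) (Fin 2) ℝ).det = 1 - ρ ^ 2 := by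
    rw [Matrix.det_fin_two_of]; ring
  rw [hS]
  ext s hs
  rw [Measure.map_apply (MeasurableEquiv.measurable _) hs, gammaRho, _root_.multivariateGaussian,
    withDensity_apply _ hs, withDensity_apply _ (MeasurableEquiv.measurable _ hs),
    ← (volume_preserving_finTwoArrow ℝ).setLIntegral_comp_preimage_emb
      (MeasurableEquiv.measurableEmbedding _)]
  refine lintegral_congr fun x => ?_
  rw [hdet, Matrix.inv_def, hdet, Matrix.adjugate_fin_two_of]
  congr 2
  · rw [Real.sqrt_inv, Real.sqrt_mul (by positivity), Real.sqrt_sq (by positivity), mul_inv]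
  · simp [Matrix.mulVec, dotProduct, Fin.sum_univ_two, Ring.inverse_eq_inv']
    field_simp
    ring

/-! ### The standardized bivariate law and the sign event -/

/-- Every linear combination of two affine functionals of a Gaussian vector, normalized to mean `0`,
variance `1` and with covariance `ρ`, is Gaussian with the variance that `γ_ρ` prescribes. -/
theorem map_pair_linear {N : ℕ} (μ : Fin N → ℝ) (B : Matrix (Fin N) (Fin N) ℝ)
    (hB : B.det ≠ 0) (c₁ c₂ : Fin N → ℝ) (d₁ d₂ ρ : ℝ)
    (hd₁ : c₁ ⬝ᵥ μ + d₁ = 0) (hd₂ : c₂ ⬝ᵥ μ + d₂ = 0)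
    (h₁ : c₁ ⬝ᵥ (B * Bᵀ) *ᵥ c₁ = 1) (h₂ : c₂ ⬝ᵥ (B * Bᵀ) *ᵥ c₂ = 1)
    (h₁₂ : c₁ ⬝ᵥ (B * Bᵀ) *ᵥ c₂ = ρ) (p q : ℝ) :
    ((_root_.multivariateGaussian μ (B * Bᵀ)).map fun x => (c₁ ⬝ᵥ x + d₁, c₂ ⬝ᵥ x + d₂)).map
      (fun z => p * z.1 + q * z.2) = gaussianReal 0 (p ^ 2 + 2 * ρ * p * q + q ^ 2).toNNReal := by
  have hm : ∀ w : Fin N → ℝ, Measurable fun z : Fin N → ℝ => w ⬝ᵥ z := fun w => by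
    unfold dotProduct; fun_prop
  have h₂₁ : c₂ ⬝ᵥ (B * Bᵀ) *ᵥ c₁ = ρ := by
    rw [← h₁₂, Matrix.dotProduct_mulVec, ← Matrix.mulVec_transpose, Matrix.transpose_mul,
      Matrix.transpose_transpose, dotProduct_comm]
  rw [Measure.map_map (by fun_prop)
    (((hm c₁).add_const d₁).prodMk ((hm c₂).add_const d₂))]
  have : (fun z : ℝ × ℝ => p * z.1 + q * z.2) ∘ (fun x => (c₁ ⬝ᵥ x + d₁, c₂ ⬝ᵥ x + d₂)) =
      fun x => (p • c₁ + q • c₂) ⬝ᵥ x + (p * d₁ + q * d₂) := by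
    ext x
    simp only [Function.comp, add_dotProduct, smul_dotProduct, smul_eq_mul]
    ring
  rw [this, multivariateGaussian_map_dot μ B hB]
  congr 2
  · simp only [add_dotProduct, smul_dotProduct, smul_eq_mul]
    linear_combination p * hd₁ + q * hd₂
  · simp only [add_dotProduct, smul_dotProduct, Matrix.mulVec_add, Matrix.mulVec_smul,
      dotProduct_add, dotProduct_smul, smul_eq_mul]
    linear_combination p ^ 2 * h₁ + q ^ 2 * h₂ + p * q * h₁₂ + p * q * h₂₁

/-- `γ_ρ` is a probability measure, and its one-dimensional linear images are the expected centered
Gaussians; in particular both marginals are standard. -/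
theorem gammaRho_map_linear (ρ : ℝ) (hρ : ρ ∈ Set.Ioo (-1 : ℝ) 1) :
    IsProbabilityMeasure (gammaRho ρ) ∧ ∀ p q : ℝ, (gammaRho ρ).map (fun z => p * z.1 + q * z.2) =
      gaussianReal 0 (p ^ 2 + 2 * ρ * p * q + q ^ 2).toNNReal := by
  have h1 : 0 < 1 - ρ ^ 2 := by nlinarith [hρ.1, hρ.2]
  have hB : (!![1, 0; ρ, √(1 - ρ ^ 2)] : Matrix (Fin 2) (Fin 2) ℝ).det ≠ 0 := by
    simpa [Matrix.det_fin_two_of] using (Real.sqrt_pos.2 h1).ne'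
  have := isProbabilityMeasure_multivariateGaussian 0 _ hB
  rw [gammaRho_eq_map ρ hρ]
  refine ⟨Measure.isProbabilityMeasure_map (by fun_prop), fun p q => ?_⟩
  rw [← map_pair_linear 0 _ hB (Pi.single 0 1) (Pi.single 1 1) 0 0 ρ]
  · congr 2
    ext x <;> simp [MeasurableEquiv.finTwoArrow]
  · simp
  · simp
  · rw [corrFactor_mul_transpose hρ]; simp
  · rw [corrFactor_mul_transpose hρ]; simp
  · rw [corrFactor_mul_transpose hρ]; simp

/-- Cramér–Wold device on `ℝ × ℝ`. -/
theorem ext_of_map_linear {m₁ m₂ : Measure (ℝ × ℝ)} [IsFiniteMeasure m₁] [IsFiniteMeasure m₂]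
    (h : ∀ p q : ℝ, m₁.map (fun z => p * z.1 + q * z.2) = m₂.map (fun z => p * z.1 + q * z.2)) :
    m₁ = m₂ := by
  refine Measure.ext_of_charFunDual (funext fun L => ?_)
  have hL : ⇑L = fun z : ℝ × ℝ => L (1, 0) * z.1 + L (0, 1) * z.2 := by
    ext z
    have : z = z.1 • ((1, 0) : ℝ × ℝ) + z.2 • ((0, 1) : ℝ × ℝ) := by ext <;> simp
    conv_lhs => rw [this, map_add, map_smul, map_smul]
    simp only [smul_eq_mul]
    ring
  rw [charFunDual_eq_charFun_map_one, charFunDual_eq_charFun_map_one, hL, h]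

/-- Up to the two null lines `z₁ = x` and `z₂ = y`, the product is negative exactly on the symmetric
difference of the half-planes `z₁ ≤ x` and `z₂ ≤ y`. -/
theorem gammaRho_sign (ρ : ℝ) (hρ : ρ ∈ Set.Ioo (-1 : ℝ) 1) (x y : ℝ) :
    (gammaRho ρ).real {z | (z.1 - x) * (z.2 - y) < 0} =
      stdNormalCDF x + stdNormalCDF y - 2 * Phi2 x y ρ := by
  obtain ⟨hP, hlin⟩ := gammaRho_map_linear ρ hρ
  have hfst : (gammaRho ρ).map Prod.fst = gaussianReal 0 1 := by
    have := hlin 1 0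
    simpa using this
  have hsnd : (gammaRho ρ).map Prod.snd = gaussianReal 0 1 := by
    have := hlin 0 1
    simpa using this
  have hatom : NullSingletonClass (gaussianReal 0 1) := nullSingletonClass_gaussianReal one_ne_zero
  have hx : ∀ᵐ z ∂gammaRho ρ, z.1 ≠ x := by
    have : (gammaRho ρ).map Prod.fst {x} = 0 := by rw [hfst]; exact measure_singleton x
    rw [Measure.map_apply measurable_fst (measurableSet_singleton x)] at this
    exact measure_eq_zero_iff_ae_notMem.1 this
  have hy : ∀ᵐ z ∂gammaRho ρ, z.2 ≠ y := by
    have : (gammaRho ρ).map Prod.snd {y} = 0 := by rw [hsnd]; exact measure_singleton y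
    rw [Measure.map_apply measurable_snd (measurableSet_singleton y)] at this
    exact measure_eq_zero_iff_ae_notMem.1 this
  set I : Set (ℝ × ℝ) := Prod.fst ⁻¹' Set.Iic x
  set J : Set (ℝ × ℝ) := Prod.snd ⁻¹' Set.Iic y
  have hI : MeasurableSet I := measurable_fst measurableSet_Iic
  have hJ : MeasurableSet J := measurable_snd measurableSet_Iic
  have hIΦ : (gammaRho ρ).real I = stdNormalCDF x := by
    rw [stdNormalCDF, ← hfst, Measure.map_apply measurable_fst measurableSet_Iic]; rfl
  have hJΦ : (gammaRho ρ).real J = stdNormalCDF y := by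
    rw [stdNormalCDF, ← hsnd, Measure.map_apply measurable_snd measurableSet_Iic]; rfl
  have hIJ : (gammaRho ρ).real (I ∩ J) = Phi2 x y ρ := rfl
  have hae : {z : ℝ × ℝ | (z.1 - x) * (z.2 - y) < 0} =ᵐ[gammaRho ρ] (I \ J ∪ J \ I : Set (ℝ × ℝ)) := by
    filter_upwards [hx, hy] with z hzx hzy
    refine propext ?_
    change (z.1 - x) * (z.2 - y) < 0 ↔ (z.1 ≤ x ∧ ¬ z.2 ≤ y) ∨ (z.2 ≤ y ∧ ¬ z.1 ≤ x)
    rw [mul_neg_iff, sub_pos, sub_neg, sub_neg, sub_pos, not_le, not_le,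
      le_iff_lt_or_eq, le_iff_lt_or_eq, or_iff_left hzx, or_iff_left hzy]
    tauto
  rw [measureReal_congr hae, measureReal_union disjoint_sdiff_sdiff (hJ.diff hI), ← hIΦ, ← hJΦ, ← hIJ]
  have e1 := measureReal_inter_add_sdiff (μ := gammaRho ρ) (s := I) hJ
  have e2 := measureReal_inter_add_sdiff (μ := gammaRho ρ) (s := J) hI
  rw [Set.inter_comm] at e2
  linarith

/-! ### The conditional probability -/

/-- Theorem 1 (per-erasure-pattern form): with `V ~ multivariateGaussian μ S`
independent of the `{0,1}^N`-valued erasure vector `E`, `s = ⟨a, V⟩ + b`,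
`ŝ = ⟨a, V ∘ E⟩ + b`, `σ_s² = aᵀ S a > 0`, for every pattern `η ∈ {0,1}^N` of positive
probability with `σ_η² = aᵀ D_η S D_η a > 0` and
`ρ_η = aᵀ D_η S a / (σ_s σ_η) ∈ (−1,1)`, one has
`P[s·ŝ < 0 | E = η] = Φ(δ) + Φ(δ̂_η) − 2Φ₂(δ, δ̂_η; ρ_η)` where
`δ = −(⟨a, μ⟩ + b)/σ_s` and `δ̂_η = −(⟨D_η a, μ⟩ + b)/σ_η`. -/
theorem cond_prob_error_given_pattern {N : ℕ} {Ω : Type*} [MeasurableSpace Ω]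
    (P : Measure Ω) [IsProbabilityMeasure P]
    (μ : Fin N → ℝ) (S : Matrix (Fin N) (Fin N) ℝ) (hS : S.PosDef)
    (V : Ω → Fin N → ℝ) (hVmeas : Measurable V)
    (hVlaw : P.map V = multivariateGaussian μ S)
    (E : Ω → Fin N → ℝ) (hEmeas : Measurable E) (hE01 : ∀ ω i, E ω i = 0 ∨ E ω i = 1)
    (hindep : IndepFun V E P)
    (a : Fin N → ℝ) (b : ℝ)
    (σs : ℝ) (hσs_def : σs = Real.sqrt (a ⬝ᵥ S.mulVec a)) (hσs : 0 < σs)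
    (η : Fin N → ℝ) (hη01 : ∀ i, η i = 0 ∨ η i = 1)
    (hηpos : 0 < P {ω | E ω = η})
    (ση : ℝ)
    (hση_def : ση = Real.sqrt (a ⬝ᵥ (Matrix.diagonal η * S * Matrix.diagonal η).mulVec a))
    (hση : 0 < ση)
    (ρη : ℝ) (hρη_def : ρη = (a ⬝ᵥ (Matrix.diagonal η * S).mulVec a) / (σs * ση))
    (hρη : ρη ∈ Set.Ioo (-1 : ℝ) 1)
    (δ δ' : ℝ) (hδ : δ = -((a ⬝ᵥ μ + b) / σs))
    (hδ' : δ' = -(((Matrix.diagonal η).mulVec a ⬝ᵥ μ + b) / ση)) :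
    ((P[|{ω | E ω = η}]) {ω | ((a ⬝ᵥ V ω) + b) * ((a ⬝ᵥ fun i => V ω i * E ω i) + b) < 0}).toReal =
      stdNormalCDF δ + stdNormalCDF δ' - 2 * Phi2 δ δ' ρη := by
  -- With these coefficients, `cᵢ ⬝ᵥ V + dᵢ` are the standardizations of `s` and of `ŝ` for the
  -- fixed pattern `η`.
  set c₁ : Fin N → ℝ := σs⁻¹ • a with hc₁
  set c₂ : Fin N → ℝ := ση⁻¹ • (Matrix.diagonal η *ᵥ a) with hc₂
  set d₁ : ℝ := -(c₁ ⬝ᵥ μ) with hd₁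
  set d₂ : ℝ := -(c₂ ⬝ᵥ μ) with hd₂
  have hσs2 : a ⬝ᵥ S *ᵥ a = σs ^ 2 := by
    rw [hσs_def, Real.sq_sqrt (Real.sqrt_pos.1 (hσs_def ▸ hσs)).le]
  have hDD : ∀ M : Matrix (Fin N) (Fin N) ℝ, ∀ u : Fin N → ℝ,
      a ⬝ᵥ (Matrix.diagonal η * M) *ᵥ u = (Matrix.diagonal η *ᵥ a) ⬝ᵥ M *ᵥ u := fun M u => by
    rw [← Matrix.mulVec_mulVec, Matrix.dotProduct_mulVec, ← Matrix.mulVec_transpose,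
      Matrix.diagonal_transpose]
  have hση2 : (Matrix.diagonal η *ᵥ a) ⬝ᵥ S *ᵥ (Matrix.diagonal η *ᵥ a) = ση ^ 2 := by
    rw [hση_def, Real.sq_sqrt (Real.sqrt_pos.1 (hση_def ▸ hση)).le, Matrix.mul_assoc, hDD,
      ← Matrix.mulVec_mulVec]
  have hsymm : a ⬝ᵥ S *ᵥ (Matrix.diagonal η *ᵥ a) = (Matrix.diagonal η *ᵥ a) ⬝ᵥ S *ᵥ a := by
    have hT : Sᵀ = S := by
      have := hS.isHermitian.eq
      rwa [Matrix.conjTranspose_eq_transpose_of_trivial] at this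
    rw [Matrix.dotProduct_mulVec, ← Matrix.mulVec_transpose, hT, dotProduct_comm]
  obtain ⟨B, hB, rfl⟩ := exists_factor hS
  have hProb := isProbabilityMeasure_multivariateGaussian μ B hB
  obtain ⟨hγ, hγlin⟩ := gammaRho_map_linear ρη hρη
  have hm : ∀ w : Fin N → ℝ, Measurable fun z : Fin N → ℝ => w ⬝ᵥ z := fun w => by
    unfold dotProduct; fun_prop
  have hT : Measurable fun x : Fin N → ℝ => (c₁ ⬝ᵥ x + d₁, c₂ ⬝ᵥ x + d₂) :=
    ((hm c₁).add_const d₁).prodMk ((hm c₂).add_const d₂)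
  have hlaw : (_root_.multivariateGaussian μ (B * Bᵀ)).map
      (fun x => (c₁ ⬝ᵥ x + d₁, c₂ ⬝ᵥ x + d₂)) = gammaRho ρη := by
    have := Measure.isProbabilityMeasure_map (μ := _root_.multivariateGaussian μ (B * Bᵀ))
      hT.aemeasurable
    refine ext_of_map_linear fun p q => ?_
    rw [hγlin, map_pair_linear μ B hB c₁ c₂ d₁ d₂ ρη]
    · rw [hd₁, add_neg_cancel]
    · rw [hd₂, add_neg_cancel]
    · rw [hc₁, Matrix.mulVec_smul, smul_dotProduct, dotProduct_smul, hσs2, smul_eq_mul, smul_eq_mul]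
      field_simp
    · rw [hc₂, Matrix.mulVec_smul, smul_dotProduct, dotProduct_smul, hση2, smul_eq_mul, smul_eq_mul]
      field_simp
    · rw [hc₁, hc₂, Matrix.mulVec_smul, smul_dotProduct, dotProduct_smul, hsymm, hρη_def, hDD,
        smul_eq_mul, smul_eq_mul]
      field_simp
  have hmask : ∀ x : Fin N → ℝ, (a ⬝ᵥ fun i => x i * η i) = (Matrix.diagonal η *ᵥ a) ⬝ᵥ x :=
    fun x => by
      simp only [dotProduct, Matrix.mulVec_diagonal]
      exact Finset.sum_congr rfl fun i _ => by ring
  have hsign : ∀ x : Fin N → ℝ,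
      (a ⬝ᵥ x + b) * ((a ⬝ᵥ fun i => x i * η i) + b) < 0 ↔
        (c₁ ⬝ᵥ x + d₁ - δ) * (c₂ ⬝ᵥ x + d₂ - δ') < 0 := fun x => by
    have e : (a ⬝ᵥ x + b) * ((a ⬝ᵥ fun i => x i * η i) + b) =
        (σs * ση) * ((c₁ ⬝ᵥ x + d₁ - δ) * (c₂ ⬝ᵥ x + d₂ - δ')) := by
      rw [hmask, hd₁, hd₂, hc₁, hc₂, hδ, hδ']
      simp only [smul_dotProduct, smul_eq_mul]
      field_simp
      ring
    rw [e, mul_neg_iff]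
    have := mul_pos hσs hση
    constructor
    · rintro (h | h)
      · exact h.2
      · linarith [h.1]
    · exact fun h => Or.inl ⟨this, h⟩
  set A : Set (ℝ × ℝ) := {z | (z.1 - δ) * (z.2 - δ') < 0}
  have hA : MeasurableSet A := measurableSet_lt (by fun_prop) measurable_const
  have hEset : MeasurableSet {ω | E ω = η} := hEmeas (measurableSet_singleton η)
  -- On `E = η` the event depends on `V` only, so that independence removes the conditioning.
  have hinter : {ω | E ω = η} ∩
      {ω | ((a ⬝ᵥ V ω) + b) * ((a ⬝ᵥ fun i => V ω i * E ω i) + b) < 0} =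
      V ⁻¹' ((fun x => (c₁ ⬝ᵥ x + d₁, c₂ ⬝ᵥ x + d₂)) ⁻¹' A) ∩ E ⁻¹' {η} := by
    ext ω
    constructor
    · rintro ⟨h, h'⟩
      have h : E ω = η := h
      refine ⟨(hsign (V ω)).1 ?_, h⟩
      rwa [Set.mem_ofPred_eq, h] at h'
    · rintro ⟨h', h⟩
      have h : E ω = η := h
      refine ⟨h, ?_⟩
      rw [Set.mem_ofPred_eq, h]
      exact (hsign (V ω)).2 h'
  rw [cond_apply hEset, hinter,
    hindep.measure_inter_preimage_eq_mul _ _ (hT hA) (measurableSet_singleton η),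
    ← Measure.map_apply hVmeas (hT hA), hVlaw, ← Measure.map_apply hT hA, hlaw,
    mul_comm (gammaRho ρη A), ← mul_assoc]
  change (((P {ω | E ω = η})⁻¹ * P {ω | E ω = η}) * _).toReal = _
  rw [ENNReal.inv_mul_cancel hηpos.ne' (measure_ne_top _ _), one_mul]
  exact gammaRho_sign ρη hρη δ δ'
end
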